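/- Let γ ≥ 1/2 be a half-integer and j ∈ {−1/2, 0, 1/2, 1, …} with j ≤ γ − 1. Then the restriction Q_{j+1+γ} of the Casimir 𝒬 of F_γ ⊗ D⁺_j to the (2γ+1)-dimensional subspace V_{j+1+γ} is not diagonalizable; consequently 𝒬 is not diagonalizable on F_γ ⊗ D⁺_j. -/

import Mathlib

/-!
Each nonzero eigenvector of `𝒬` in a weight space has the Casimir value of a lowest weight as its
eigenvalue: apply `𝒥₋`, which commutes with `𝒬`, until the vector is annihilated
(`eigenvalue_eq`). On `V_{j+1+γ}` the candidates are `q₀, …, q_G` with `G = 2γ`, and for `j ≤ γ - 1`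
two of them coincide, `q₀ = q_{G-K}` with `K = 2j + 1` (`qn_zero`). So if `𝒬` were diagonalizable
there, the degree-`G` polynomial `∏_{t=1}^G (𝒬 - q_t)` would vanish on this `(G+1)`-dimensional
space. But `𝒬` is tridiagonal in the tensor basis with nonzero subdiagonal entries, so
`|γ,-γ⟩ ⊗ |j,j+1+2γ⟩` is a cyclic vector, which this polynomial does not kill (`qpoly_eV`, `qpoly_eV_ne_zero`).

For the whole tensor product, the projection onto a weight space commutes with `𝒬`, so
diagonalizability on the full space would restrict to `V_{j+1+γ}` (`diagOn_VM_of_top`).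
-/

/-!
Statement 0: lowest weight vectors ψ_(μ) in the coupling F_γ ⊗ D⁺_j for sl(2,ℝ).

Conventions: γ = G/2 with `G : ℕ`, `1 ≤ G`; j = (K-1)/2 with `K : ℕ` (so j ∈ {-1/2,0,1/2,...}).
The space F_γ ⊗ D⁺_j has basis indexed by `(ν, k) : Fin (G+1) × ℕ`, the basis vector
`single (ν,k) 1` representing |γ, ν-γ⟩ ⊗ |j, j+1+k⟩.
-/

noncomputable section

/-- Principal branch of the complex square root. -/
def csqrt (z : ℂ) : ℂ := z ^ ((1 : ℂ) / 2)

/-- C₊(j,m) = i √(j-m) √(j+m+1). -/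
def Cp (j m : ℂ) : ℂ := Complex.I * csqrt (j - m) * csqrt (j + m + 1)

/-- C₋(j,m) = i √(j+m) √(j-m+1). -/
def Cm (j m : ℂ) : ℂ := Complex.I * csqrt (j + m) * csqrt (j - m + 1)

/-- γ = G/2, as a complex number. -/
def gam (G : ℕ) : ℂ := (G : ℂ) / 2

/-- j = (K-1)/2, as a complex number. -/
def jd (K : ℕ) : ℂ := ((K : ℂ) - 1) / 2

/-- μ = ν - γ for ν : Fin (G+1). -/
def muc (G : ℕ) (ν : Fin (G + 1)) : ℂ := ((ν : ℕ) : ℂ) - gam G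

/-- m = j + 1 + k for k : ℕ. -/
def md (K : ℕ) (k : ℕ) : ℂ := jd K + 1 + (k : ℂ)

/-- The vector space F_γ ⊗ D⁺_j. -/
abbrev W (G : ℕ) := (Fin (G + 1) × ℕ) →₀ ℂ

/-- Basis vector with coefficient, with out-of-range indices giving 0. -/
def eV (G : ℕ) (i k : ℤ) (c : ℂ) : W G :=
  if h : 0 ≤ i ∧ i < (G : ℤ) + 1 ∧ 0 ≤ k then
    Finsupp.single ((⟨i.toNat, by omega⟩ : Fin (G + 1)), k.toNat) c
  else 0

/-- 𝒥₀ = J₀ ⊗ 1 + 1 ⊗ J₀. -/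
def J0 (G K : ℕ) : W G →ₗ[ℂ] W G :=
  Finsupp.lsum ℂ fun p => LinearMap.toSpanSingleton ℂ (W G)
    (Finsupp.single p (muc G p.1 + md K p.2))

/-- 𝒥₊ = J₊ ⊗ 1 + 1 ⊗ J₊. -/
def Jp (G K : ℕ) : W G →ₗ[ℂ] W G :=
  Finsupp.lsum ℂ fun p => LinearMap.toSpanSingleton ℂ (W G)
    (eV G ((p.1 : ℕ) + 1) (p.2 : ℕ) (Cp (gam G) (muc G p.1)) +
      eV G (p.1 : ℕ) ((p.2 : ℕ) + 1) (Cp (jd K) (md K p.2)))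

/-- 𝒥₋ = J₋ ⊗ 1 + 1 ⊗ J₋. -/
def Jm (G K : ℕ) : W G →ₗ[ℂ] W G :=
  Finsupp.lsum ℂ fun p => LinearMap.toSpanSingleton ℂ (W G)
    (eV G ((p.1 : ℕ) - 1) (p.2 : ℕ) (Cm (gam G) (muc G p.1)) +
      eV G (p.1 : ℕ) ((p.2 : ℕ) - 1) (Cm (jd K) (md K p.2)))

/-- The Casimir 𝒬 = -𝒥₀(𝒥₀+1) + 𝒥₋𝒥₊. -/
def Qcas (G K : ℕ) : W G →ₗ[ℂ] W G :=
  -(J0 G K ∘ₗ (J0 G K + LinearMap.id)) + Jm G K ∘ₗ Jp G K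

/-- The lowest weight vector ψ_(μ), μ = t - γ:
ψ_(μ) = Σ_{ν=-γ}^{μ} (-1)^{γ+ν} (Π_{σ=-γ}^{ν-1} C₊(j, j+μ-σ)/C₊(γ,σ)) |γ,ν⟩ ⊗ |j, j+1+μ-ν⟩. -/
def psiLW (G K : ℕ) (t : Fin (G + 1)) : W G :=
  ∑ s ∈ Finset.range (t.1 + 1),
    eV G (s : ℤ) ((t.1 : ℤ) - (s : ℤ))
      ((-1 : ℂ) ^ s *
        ∏ r ∈ Finset.range s,
          Cp (jd K) (jd K + ((t.1 : ℕ) : ℂ) - (r : ℂ)) / Cp (gam G) ((r : ℂ) - gam G))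

/-- q_(μ) = -(j+μ)(j+μ+1). -/
def qe (G K : ℕ) (t : Fin (G + 1)) : ℂ :=
  -((jd K + muc G t) * (jd K + muc G t + 1))

/-- The 𝒥₀-eigenvalue-M subspace V_M of F_γ ⊗ D⁺_j, for M = j+1-γ+M', M' : ℕ:
it is spanned by the basis vectors |γ,ν-γ⟩⊗|j,j+1+k⟩ with ν + k = M'. -/
def VM (G : ℕ) (M' : ℕ) : Submodule ℂ (W G) :=
  Submodule.span ℂ
    {w : W G | ∃ p : Fin (G + 1) × ℕ, (p.1 : ℕ) + p.2 = M' ∧ w = Finsupp.single p 1}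

/-- A linear operator is diagonalizable on an invariant subspace `p` iff `p` is spanned by
eigenvectors of the operator lying in `p`. -/
def DiagOn {V : Type*} [AddCommGroup V] [Module ℂ V]
    (f : V →ₗ[ℂ] V) (p : Submodule ℂ V) : Prop :=
  Submodule.span ℂ {w : V | w ∈ p ∧ ∃ c : ℂ, f w = c • w} = p

/-! ### The operators on basis vectors -/

lemma csqrt_mul_self (z : ℂ) : csqrt z * csqrt z = z := by
  unfold csqrt
  rw [← pow_two]
  simp

lemma csqrt_zero : csqrt 0 = 0 := by
  exact mul_self_eq_zero.1 (csqrt_mul_self 0)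

lemma csqrt_ne_zero {z : ℂ} (hz : z ≠ 0) : csqrt z ≠ 0 := by
  intro h
  apply hz
  rw [← csqrt_mul_self z, h, mul_zero]

lemma Cp_mul_Cm (j m : ℂ) : Cp j m * Cm j (m + 1) = -((j - m) * (j + m + 1)) := by
  have h1 := csqrt_mul_self (j - m)
  have h2 := csqrt_mul_self (j + m + 1)
  unfold Cp Cm
  rw [show j + (m + 1) = j + m + 1 by ring, show j - (m + 1) + 1 = j - m by ring]
  linear_combination
    (csqrt (j - m) * csqrt (j - m) * csqrt (j + m + 1) * csqrt (j + m + 1)) * Complex.I_mul_I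
      - (csqrt (j + m + 1) * csqrt (j + m + 1)) * h1 - (j - m) * h2

lemma eV_smul (G : ℕ) (i k : ℤ) (c : ℂ) : eV G i k c = c • eV G i k 1 := by
  unfold eV
  split_ifs <;> simp

lemma eV_of_not {G : ℕ} {i k : ℤ} (h : ¬ (0 ≤ i ∧ i < (G : ℤ) + 1 ∧ 0 ≤ k)) (c : ℂ) :
    eV G i k c = 0 := dif_neg h

lemma eV_nat {G : ℕ} (p : Fin (G + 1) × ℕ) (c : ℂ) :
    eV G ((p.1 : ℕ) : ℤ) (p.2 : ℤ) c = Finsupp.single p c := by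
  unfold eV
  rw [dif_pos (by have := p.1.2; omega)]
  simp

/-- The formula for `𝒥₊` holds for all integer indices: whenever the source vector is out of range
but a target is not, the coefficient `C₊` vanishes. -/
lemma Jp_eV (G K : ℕ) (i k : ℤ) :
    Jp G K (eV G i k 1) = Cp (gam G) (i - gam G) • eV G (i + 1) k 1
      + Cp (jd K) (jd K + 1 + k) • eV G i (k + 1) 1 := by
  by_cases h : 0 ≤ i ∧ i < (G : ℤ) + 1 ∧ 0 ≤ k
  · obtain ⟨h1, h2, h3⟩ := h
    lift i to ℕ using h1
    lift k to ℕ using h3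
    rw [eV_nat (G := G) (⟨i, by omega⟩, k) 1]
    simp only [Jp, Finsupp.lsum_single, LinearMap.toSpanSingleton_apply, one_smul]
    rw [eV_smul, eV_smul G _ ((k : ℤ) + 1)]
    simp [muc, md]
  · rw [eV_of_not h, map_zero]
    have e1 : Cp (gam G) (i - gam G) • eV G (i + 1) k 1 = 0 := by
      by_cases hi : i = -1
      · subst hi
        simp [Cp, csqrt_zero]
      · rw [eV_of_not (by omega), smul_zero]
    have e2 : Cp (jd K) (jd K + 1 + k) • eV G i (k + 1) 1 = 0 := by
      by_cases hk : k = -1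
      · subst hk
        simp [Cp, csqrt_zero]
      · rw [eV_of_not (by omega), smul_zero]
    rw [e1, e2, add_zero]

/-- The formula for `𝒥₋` holds for all integer indices, as for `Jp_eV`. -/
lemma Jm_eV (G K : ℕ) (i k : ℤ) :
    Jm G K (eV G i k 1) = Cm (gam G) (i - gam G) • eV G (i - 1) k 1
      + Cm (jd K) (jd K + 1 + k) • eV G i (k - 1) 1 := by
  by_cases h : 0 ≤ i ∧ i < (G : ℤ) + 1 ∧ 0 ≤ k
  · obtain ⟨h1, h2, h3⟩ := h
    lift i to ℕ using h1
    lift k to ℕ using h3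
    rw [eV_nat (G := G) (⟨i, by omega⟩, k) 1]
    simp only [Jm, Finsupp.lsum_single, LinearMap.toSpanSingleton_apply, one_smul]
    rw [eV_smul, eV_smul G _ ((k : ℤ) - 1)]
    simp [muc, md]
  · rw [eV_of_not h, map_zero]
    have e1 : Cm (gam G) (i - gam G) • eV G (i - 1) k 1 = 0 := by
      by_cases hi : i = G + 1
      · subst hi
        have : gam G - ((G : ℂ) + 1 - gam G) + 1 = 0 := by unfold gam; ring
        simp [Cm, this, csqrt_zero]
      · rw [eV_of_not (by omega), smul_zero]
    have e2 : Cm (jd K) (jd K + 1 + k) • eV G i (k - 1) 1 = 0 := by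
      rw [eV_of_not (by omega), smul_zero]
    rw [e1, e2, add_zero]

lemma J0_eV (G K : ℕ) (i k : ℤ) :
    J0 G K (eV G i k 1) = (i - gam G + (jd K + 1 + k)) • eV G i k 1 := by
  by_cases h : 0 ≤ i ∧ i < (G : ℤ) + 1 ∧ 0 ≤ k
  · obtain ⟨h1, h2, h3⟩ := h
    lift i to ℕ using h1
    lift k to ℕ using h3
    rw [eV_nat (G := G) (⟨i, by omega⟩, k) 1]
    simp only [J0, Finsupp.lsum_single, LinearMap.toSpanSingleton_apply, one_smul]
    simp [muc, md]
  · rw [eV_of_not h, map_zero, smul_zero]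

/-- The commutation relation `𝒥₋𝒥₊ - 𝒥₊𝒥₋ = 2𝒥₀`. -/
lemma Jm_Jp (G K : ℕ) (w : W G) :
    Jm G K (Jp G K w) = Jp G K (Jm G K w) + (2 : ℂ) • J0 G K w := by
  have : Jm G K ∘ₗ Jp G K = Jp G K ∘ₗ Jm G K + (2 : ℂ) • J0 G K := by
    apply Finsupp.lhom_ext'
    intro p
    apply LinearMap.ext_ring
    simp only [LinearMap.comp_apply, Finsupp.lsingle_apply, LinearMap.add_apply,
      LinearMap.smul_apply, ← eV_nat]
    generalize ((p.1 : ℕ) : ℤ) = i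
    generalize (p.2 : ℤ) = k
    simp only [Jp_eV, Jm_eV, J0_eV, map_add, map_smul]
    have h1 := Cp_mul_Cm (gam G) (i - gam G)
    have h2 := Cp_mul_Cm (gam G) (i - 1 - gam G)
    have h3 := Cp_mul_Cm (jd K) (jd K + 1 + k)
    have h4 := Cp_mul_Cm (jd K) (jd K + 1 + (k - 1))
    rw [show (i : ℂ) - gam G + 1 = i + 1 - gam G by ring] at h1
    rw [show (i : ℂ) - 1 - gam G + 1 = i - gam G by ring] at h2
    rw [show jd K + 1 + k + 1 = jd K + 1 + ((k : ℂ) + 1) by ring] at h3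
    rw [show jd K + 1 + ((k : ℂ) - 1) + 1 = jd K + 1 + k by ring] at h4
    push_cast
    simp only [add_sub_cancel_right, sub_add_cancel]
    linear_combination (norm := module) (h1 - h2 + h3 - h4) • (eV G i k 1)
  exact LinearMap.congr_fun this w

/-! ### Weight spaces -/

lemma eV_mem_VM (G n : ℕ) (i k : ℤ) (h : i + k = n) : eV G i k 1 ∈ VM G n := by
  by_cases hr : 0 ≤ i ∧ i < (G : ℤ) + 1 ∧ 0 ≤ k
  · obtain ⟨h1, h2, h3⟩ := hr
    lift i to ℕ using h1
    lift k to ℕ using h3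
    rw [eV_nat (G := G) (⟨i, by omega⟩, k) 1]
    exact Submodule.subset_span ⟨_, by simpa using by exact_mod_cast h, rfl⟩
  · rw [eV_of_not hr]
    exact zero_mem _

/-- The `𝒥₀`-eigenvalue `j + 1 - γ + n` on `VM G n`. -/
def wt (G K n : ℕ) : ℂ := jd K + 1 - gam G + n

/-- Induction principle for linear conditions on a weight space. -/
lemma VM_le {G n : ℕ} {S : Submodule ℂ (W G)}
    (h : ∀ i k : ℕ, i ≤ G → i + k = n → eV G i k 1 ∈ S) : VM G n ≤ S := by
  refine Submodule.span_le.2 ?_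
  rintro w ⟨p, hp, rfl⟩
  rw [← eV_nat]
  exact h _ _ (by have := p.1.2; omega) hp

lemma J0_VM {G K n : ℕ} {w : W G} (hw : w ∈ VM G n) : J0 G K w = wt G K n • w := by
  have : VM G n ≤ LinearMap.ker (J0 G K - wt G K n • LinearMap.id) := by
    refine VM_le fun i k _ hn => ?_
    rw [LinearMap.mem_ker, LinearMap.sub_apply, J0_eV, sub_eq_zero, ← hn]
    simp only [wt, LinearMap.smul_apply, LinearMap.id_apply]
    congr 1
    push_cast
    ring
  have h := this hw
  rwa [LinearMap.mem_ker, LinearMap.sub_apply, sub_eq_zero] at h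

lemma Jm_VM_succ {G K n : ℕ} {w : W G} (hw : w ∈ VM G (n + 1)) : Jm G K w ∈ VM G n := by
  have : VM G (n + 1) ≤ (VM G n).comap (Jm G K) := by
    refine VM_le fun i k _ hn => ?_
    rw [Submodule.mem_comap, Jm_eV]
    exact add_mem (Submodule.smul_mem _ _ (eV_mem_VM _ _ _ _ (by omega)))
      (Submodule.smul_mem _ _ (eV_mem_VM _ _ _ _ (by omega)))
  exact this hw

lemma Jm_VM_zero {G K : ℕ} {w : W G} (hw : w ∈ VM G 0) : Jm G K w = 0 := by
  have : VM G 0 ≤ LinearMap.ker (Jm G K) := by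
    refine VM_le fun i k _ hn => ?_
    rw [LinearMap.mem_ker, Jm_eV, eV_of_not (by omega), eV_of_not (by omega)]
    simp
  exact this hw

lemma Jp_VM {G K n : ℕ} {w : W G} (hw : w ∈ VM G n) : Jp G K w ∈ VM G (n + 1) := by
  have : VM G n ≤ (VM G (n + 1)).comap (Jp G K) := by
    refine VM_le fun i k _ hn => ?_
    rw [Submodule.mem_comap, Jp_eV]
    exact add_mem (Submodule.smul_mem _ _ (eV_mem_VM _ _ _ _ (by push_cast; omega)))
      (Submodule.smul_mem _ _ (eV_mem_VM _ _ _ _ (by push_cast; omega)))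
  exact this hw

lemma Qcas_VM_apply {G K n : ℕ} {w : W G} (hw : w ∈ VM G n) :
    Qcas G K w = -(wt G K n * (wt G K n + 1)) • w + Jm G K (Jp G K w) := by
  simp only [Qcas, LinearMap.add_apply, LinearMap.neg_apply, LinearMap.comp_apply,
    LinearMap.id_apply, map_add, J0_VM hw, map_smul]
  module

lemma Qcas_VM {G K n : ℕ} {w : W G} (hw : w ∈ VM G n) : Qcas G K w ∈ VM G n := by
  rw [Qcas_VM_apply hw]
  exact add_mem (Submodule.smul_mem _ _ hw) (Jm_VM_succ (Jp_VM hw))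

/-- On a weight space, `𝒬 = -𝒥₀(𝒥₀ - 1) + 𝒥₊𝒥₋`. -/
lemma Qcas_VM_apply' {G K n : ℕ} {w : W G} (hw : w ∈ VM G n) :
    Qcas G K w = -(wt G K n * (wt G K n - 1)) • w + Jp G K (Jm G K w) := by
  rw [Qcas_VM_apply hw, Jm_Jp, J0_VM hw]
  module

lemma wt_succ (G K n : ℕ) : wt G K (n + 1) = wt G K n + 1 := by
  simp only [wt]; push_cast; ring

lemma Qcas_Jm {G K n : ℕ} {w : W G} (hw : w ∈ VM G (n + 1)) :
    Qcas G K (Jm G K w) = Jm G K (Qcas G K w) := by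
  rw [Qcas_VM_apply (Jm_VM_succ hw), Qcas_VM_apply' hw, wt_succ, map_add, map_smul]
  module

/-! ### Possible eigenvalues -/

/-- The Casimir value of a lowest weight vector of weight `wt G K n`. -/
def qn (G K n : ℕ) : ℂ := -(wt G K n * (wt G K n - 1))

/-- Lowering an eigenvector until it is annihilated by `𝒥₋` shows that its eigenvalue is the
Casimir value of some lowest weight. -/
lemma eigenvalue_eq {G K : ℕ} (n : ℕ) {w : W G} (hw : w ∈ VM G n) (hw0 : w ≠ 0) {c : ℂ}
    (hc : Qcas G K w = c • w) : ∃ t ≤ n, c = qn G K t := by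
  have key : Jm G K w = 0 → c = qn G K n := by
    intro h
    rw [Qcas_VM_apply' hw, h, map_zero, add_zero] at hc
    exact (smul_left_injective ℂ hw0 hc).symm
  induction n generalizing w with
  | zero => exact ⟨0, le_rfl, key (Jm_VM_zero hw)⟩
  | succ n ih =>
    by_cases h : Jm G K w = 0
    · exact ⟨n + 1, le_rfl, key h⟩
    · have hc' : Qcas G K (Jm G K w) = c • Jm G K w := by rw [Qcas_Jm hw, hc, map_smul]
      obtain ⟨t, ht, e⟩ := ih (Jm_VM_succ hw) h hc' (by
        intro h'
        have := hc'
        rw [Qcas_VM_apply' (Jm_VM_succ hw), h', map_zero, add_zero] at this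
        exact (smul_left_injective ℂ h this).symm)
      exact ⟨t, by omega, e⟩

/-- The coincidence `q₀ = q_{G-K}` of two Casimir values, from the symmetry `M ↦ 1 - M`. -/
lemma qn_zero {G K : ℕ} (h : K + 1 ≤ G) : qn G K 0 = qn G K (G - K) := by
  simp only [qn, wt, jd, gam]
  push_cast [Nat.cast_sub (show K ≤ G by omega)]
  ring

lemma eigenvalue_eq_succ {G K : ℕ} (h : K + 1 ≤ G) {w : W G} (hw : w ∈ VM G G) (hw0 : w ≠ 0)
    {c : ℂ} (hc : Qcas G K w = c • w) : ∃ t < G, c = qn G K (t + 1) := by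
  obtain ⟨t, ht, e⟩ := eigenvalue_eq G hw hw0 hc
  rcases t with _ | t
  · refine ⟨G - K - 1, by omega, ?_⟩
    rw [e, qn_zero h]
    congr 1
    omega
  · exact ⟨t, by omega, e⟩

/-! ### Cyclicity of the first basis vector -/

/-- The span of the first `n` basis vectors of `VM G G`. -/
def fil (G n : ℕ) : Submodule ℂ (W G) :=
  Submodule.span ℂ {w | ∃ i : ℕ, i < n ∧ w = eV G i (G - i) 1}

lemma fil_mono {G m n : ℕ} (h : m ≤ n) : fil G m ≤ fil G n :=
  Submodule.span_mono fun _ ⟨i, hi, e⟩ => ⟨i, by omega, e⟩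

lemma eV_mem_fil {G n : ℕ} {i : ℤ} (hi : i < n) {k : ℤ} (hk : k = G - i) :
    eV G i k 1 ∈ fil G n := by
  subst hk
  by_cases h : 0 ≤ i
  · lift i to ℕ using h
    exact Submodule.subset_span ⟨i, by omega, rfl⟩
  · rw [eV_of_not (by omega)]
    exact zero_mem _

/-- `𝒬` is tridiagonal; this is its action on a basis vector modulo the preceding ones. -/
lemma Qcas_eV_sub_mem (G K n : ℕ) :
    Qcas G K (eV G n (G - n) 1) - (Cp (gam G) (n - gam G) * Cm (jd K) (jd K + 1 + (G - n))) •
      eV G (n + 1) (G - n - 1) 1 ∈ fil G (n + 1) := by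
  rw [Qcas_VM_apply (n := G) (eV_mem_VM _ _ _ _ (by ring))]
  simp only [Jp_eV, Jm_eV, map_add, map_smul]
  have h1 : eV G n (G - n) 1 ∈ fil G (n + 1) := eV_mem_fil (by push_cast; omega) rfl
  have h2 : eV G (n - 1) (G - n + 1) 1 ∈ fil G (n + 1) := eV_mem_fil (by push_cast; omega) (by ring)
  push_cast
  simp only [add_sub_cancel_right]
  rw [← Submodule.Quotient.mk_eq_zero] at h1 h2 ⊢
  simp only [Submodule.Quotient.mk_add, Submodule.Quotient.mk_sub, Submodule.Quotient.mk_smul,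
    h1, h2]
  module

lemma Qcas_fil {G K n : ℕ} {w : W G} (hw : w ∈ fil G n) : Qcas G K w ∈ fil G (n + 1) := by
  have : fil G n ≤ (fil G (n + 1)).comap (Qcas G K) := by
    refine Submodule.span_le.2 ?_
    rintro w ⟨i, hi, rfl⟩
    have h := fil_mono (show i + 1 ≤ n + 1 by omega) (Qcas_eV_sub_mem G K i)
    have h2 : eV G (i + 1) (G - i - 1) 1 ∈ fil G (n + 1) :=
      eV_mem_fil (by push_cast; omega) (by ring)
    have h3 := add_mem h (Submodule.smul_mem _
      (Cp (gam G) (i - gam G) * Cm (jd K) (jd K + 1 + (G - i))) h2)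
    rwa [sub_add_cancel] at h3
  exact this hw

lemma subdiag_ne_zero {G K n : ℕ} (h : n < G) :
    Cp (gam G) (n - gam G) * Cm (jd K) (jd K + 1 + (G - n)) ≠ 0 := by
  obtain ⟨r, rfl⟩ : ∃ r, G = n + 1 + r := ⟨G - n - 1, by omega⟩
  unfold Cp Cm
  have hI := Complex.I_ne_zero
  refine mul_ne_zero (mul_ne_zero (mul_ne_zero hI (csqrt_ne_zero ?_)) (csqrt_ne_zero ?_))
    (mul_ne_zero (mul_ne_zero hI (csqrt_ne_zero ?_)) (csqrt_ne_zero ?_))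
  · rw [show gam (n + 1 + r) - (n - gam (n + 1 + r)) = ((r + 1 : ℕ) : ℂ) by
      unfold gam; push_cast; ring]
    exact Nat.cast_ne_zero.2 (by omega)
  · rw [show gam (n + 1 + r) + (n - gam (n + 1 + r)) + 1 = ((n + 1 : ℕ) : ℂ) by
      push_cast; ring]
    exact Nat.cast_ne_zero.2 (by omega)
  · rw [show jd K + (jd K + 1 + (((n + 1 + r : ℕ) : ℂ) - n)) = ((K + 1 + r : ℕ) : ℂ) by
      unfold jd; push_cast; ring]
    exact Nat.cast_ne_zero.2 (by omega)
  · rw [show jd K - (jd K + 1 + (((n + 1 + r : ℕ) : ℂ) - n)) + 1 = -((r + 1 : ℕ) : ℂ) by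
      push_cast; ring]
    exact neg_ne_zero.2 (Nat.cast_ne_zero.2 (by omega))

/-- The polynomial whose roots are the Casimir values `q₁, …, q_d`. -/
def qpoly (G K d : ℕ) : Polynomial ℂ :=
  ∏ t ∈ Finset.range d, (Polynomial.X - Polynomial.C (qn G K (t + 1)))

lemma qpoly_succ_apply (G K d : ℕ) (w : W G) :
    Polynomial.aeval (Qcas G K) (qpoly G K (d + 1)) w =
      Qcas G K (Polynomial.aeval (Qcas G K) (qpoly G K d) w)
        - qn G K (d + 1) • Polynomial.aeval (Qcas G K) (qpoly G K d) w := by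
  rw [qpoly, Finset.prod_range_succ, mul_comm, map_mul, Module.End.mul_apply, ← qpoly]
  simp [Module.algebraMap_end_apply]

/-- As `𝒬` has nonzero subdiagonal entries, `qpoly G K d` evaluated at `𝒬` moves
the first basis vector of `VM G G` to a nonzero multiple of basis vector number `d`, modulo the preceding ones. -/
lemma qpoly_eV (G K : ℕ) {d : ℕ} (hd : d ≤ G) : ∃ a : ℂ, a ≠ 0 ∧
    Polynomial.aeval (Qcas G K) (qpoly G K d) (eV G 0 G 1) - a • eV G d (G - d) 1 ∈ fil G d := by
  induction d with
  | zero => exact ⟨1, one_ne_zero, by simp [qpoly]⟩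
  | succ d ih =>
    obtain ⟨a, ha, hm⟩ := ih (by omega)
    refine ⟨_, mul_ne_zero ha (subdiag_ne_zero (K := K) (show d < G by omega)), ?_⟩
    rw [qpoly_succ_apply]
    generalize Polynomial.aeval (Qcas G K) (qpoly G K d) (eV G 0 G 1) = y at hm ⊢
    have h1 := Qcas_fil (K := K) hm
    have h2 := fil_mono (Nat.le_succ d) hm
    have h3 := Qcas_eV_sub_mem G K d
    have h4 : eV G d (G - d) 1 ∈ fil G (d + 1) := eV_mem_fil (by push_cast; omega) rfl
    rw [map_sub, map_smul] at h1
    push_cast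
    rw [show (G : ℤ) - (d + 1) = G - d - 1 by ring]
    have h5 := sub_mem (add_mem h1 (Submodule.smul_mem _ a h3)) (Submodule.smul_mem _
      (qn G K (d + 1)) (add_mem h2 (Submodule.smul_mem _ a h4)))
    convert h5 using 1
    module

lemma eV_not_mem_fil (G : ℕ) : eV G G 0 1 ∉ fil G G := by
  intro h
  have hle : fil G G ≤ LinearMap.ker (Finsupp.lapply (R := ℂ) (M := ℂ) (Fin.last G, 0)) := by
    refine Submodule.span_le.2 ?_
    rintro w ⟨i, hi, rfl⟩
    have e := eV_nat (G := G) (⟨i, by omega⟩, G - i) 1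
    push_cast [Nat.cast_sub hi.le] at e
    rw [SetLike.mem_coe, LinearMap.mem_ker, e, Finsupp.lapply_apply, Finsupp.single_apply, if_neg]
    intro h
    have := congrArg (fun x => (x.1 : ℕ)) h
    simp at this
    omega
  have h' := hle h
  have e := eV_nat (G := G) (Fin.last G, 0) 1
  simp only [Fin.val_last, Nat.cast_zero] at e
  rw [LinearMap.mem_ker, e] at h'
  simp at h'

lemma qpoly_eV_ne_zero (G K : ℕ) :
    Polynomial.aeval (Qcas G K) (qpoly G K G) (eV G 0 G 1) ≠ 0 := by
  intro h
  obtain ⟨a, ha, hm⟩ := qpoly_eV G K (le_refl G)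
  rw [h, zero_sub, neg_mem_iff, Submodule.smul_mem_iff _ ha, sub_self] at hm
  exact eV_not_mem_fil G hm

lemma not_diagOn_VM {G K : ℕ} (h : K + 1 ≤ G) : ¬ DiagOn (Qcas G K) (VM G G) := by
  intro hd
  have hle : VM G G ≤ LinearMap.ker (Polynomial.aeval (Qcas G K) (qpoly G K G)) := by
    rw [← hd]
    refine Submodule.span_le.2 ?_
    rintro w ⟨hw, c, hc⟩
    rw [SetLike.mem_coe, LinearMap.mem_ker]
    by_cases hw0 : w = 0
    · rw [hw0, map_zero]
    obtain ⟨t, ht, e⟩ := eigenvalue_eq_succ h hw hw0 hc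
    rw [Module.End.aeval_apply_of_hasEigenvector
      (Module.End.hasEigenvector_iff.2 ⟨Module.End.mem_eigenspace_iff.2 hc, hw0⟩), qpoly,
      Polynomial.eval_prod, Finset.prod_eq_zero (Finset.mem_range.2 ht) (by simp [e]), zero_smul]
  exact qpoly_eV_ne_zero G K (hle (eV_mem_VM G G 0 G (by simp)))

/-! ### The whole tensor product -/

/-- The projection onto the weight space `VM G n`, killing all other weight spaces. -/
def prj (G n : ℕ) : W G →ₗ[ℂ] W G :=
  Finsupp.lsum ℂ fun p => LinearMap.toSpanSingleton ℂ (W G)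
    (if (p.1 : ℕ) + p.2 = n then Finsupp.single p 1 else 0)

lemma prj_single (G n : ℕ) (p : Fin (G + 1) × ℕ) :
    prj G n (Finsupp.single p 1) =
      if (p.1 : ℕ) + p.2 = n then Finsupp.single p 1 else 0 := by
  simp [prj]

lemma prj_VM {G n m : ℕ} {w : W G} (hw : w ∈ VM G m) :
    prj G n w = if m = n then w else 0 := by
  have : VM G m ≤ LinearMap.ker (prj G n - if m = n then LinearMap.id else 0) := by
    refine Submodule.span_le.2 ?_
    rintro w ⟨p, hp, rfl⟩
    rw [SetLike.mem_coe, LinearMap.mem_ker, LinearMap.sub_apply, prj_single, hp]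
    split_ifs <;> simp
  have h := this hw
  rw [LinearMap.mem_ker, LinearMap.sub_apply, sub_eq_zero] at h
  rw [h]
  split_ifs <;> simp

lemma single_mem_VM (G : ℕ) (p : Fin (G + 1) × ℕ) :
    (Finsupp.single p 1 : W G) ∈ VM G ((p.1 : ℕ) + p.2) := Submodule.subset_span ⟨p, rfl, rfl⟩

lemma prj_mem (G n : ℕ) (w : W G) : prj G n w ∈ VM G n := by
  induction w using Finsupp.induction_linear with
  | zero => simp
  | add f g hf hg => rw [map_add]; exact add_mem hf hg
  | single p c =>
    rw [← mul_one c, ← smul_eq_mul, ← Finsupp.smul_single, map_smul, prj_single]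
    refine Submodule.smul_mem _ _ ?_
    split_ifs with h
    · exact h ▸ single_mem_VM G p
    · exact zero_mem _

lemma Qcas_prj (G K n : ℕ) (w : W G) : Qcas G K (prj G n w) = prj G n (Qcas G K w) := by
  have : Qcas G K ∘ₗ prj G n = prj G n ∘ₗ Qcas G K := by
    apply Finsupp.lhom_ext'
    intro p
    apply LinearMap.ext_ring
    simp only [LinearMap.comp_apply, Finsupp.lsingle_apply]
    rw [prj_VM (Qcas_VM (single_mem_VM G p)), prj_single]
    split_ifs <;> simp
  exact LinearMap.congr_fun this w

/-- Diagonalizability on the whole space restricts to weight spaces, as the weight projections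
commute with `𝒬`. -/
lemma diagOn_VM_of_top {G K : ℕ} (n : ℕ) (h : DiagOn (Qcas G K) ⊤) :
    DiagOn (Qcas G K) (VM G n) := by
  refine le_antisymm (Submodule.span_le.2 fun w hw => hw.1) fun x hx => ?_
  have hle : (⊤ : Submodule ℂ (W G)) ≤ (Submodule.span ℂ
      {w : W G | w ∈ VM G n ∧ ∃ c : ℂ, Qcas G K w = c • w}).comap (prj G n) := by
    rw [← h]
    refine Submodule.span_le.2 ?_
    rintro w ⟨-, c, hc⟩
    exact Submodule.subset_span ⟨prj_mem G n w, c, by rw [Qcas_prj, hc, map_smul]⟩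
  have := hle (Submodule.mem_top (x := x))
  rwa [Submodule.mem_comap, prj_VM hx, if_pos rfl] at this

/-- For j ≤ γ-1, the restriction of 𝒬 to V_{j+1+γ} (which corresponds to
M' = 2γ = G) is not diagonalizable; consequently 𝒬 is not diagonalizable on F_γ ⊗ D⁺_j. -/
theorem Qcas_not_diagonalizable (G K : ℕ) (hG : 1 ≤ G)
    (hj : ((K : ℝ) - 1) / 2 ≤ (G : ℝ) / 2 - 1) :
    ¬ DiagOn (Qcas G K) (VM G G) ∧
    ¬ DiagOn (Qcas G K) (⊤ : Submodule ℂ (W G)) := by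
  have h : K + 1 ≤ G := by
    have h' : (K : ℝ) + 1 ≤ G := by linarith
    exact_mod_cast h'
  exact ⟨not_diagOn_VM h, fun ht => not_diagOn_VM h (diagOn_VM_of_top G ht)⟩

end
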